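/- arXiv:1710.07132 — 2 statements merged into one kernel-verified Lean document; each statement's English description precedes it below -/
import Mathlib

section
/- There exists a finite simple graph G with ω(G) = 3 (i.e., G contains a triangle but contains no K₄ as a subgraph) and χ₃(G) = 3 = ⌈ω(G)/2⌉ + 1. -/
/-- A triangle-free coloring of `G` with `k` colors: no three mutually adjacent
vertices receive the same color. -/
def IsTriangleFreeColoring {V : Type*} (G : SimpleGraph V) {k : ℕ} (c : V → Fin k) : Prop :=
  ∀ u v w : V, G.Adj u v → G.Adj v w → G.Adj u w → ¬(c u = c v ∧ c v = c w)

/-- The triangle-free chromatic number: the least `k` admitting a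
triangle-free `k`-coloring. -/
noncomputable def triChromNum {V : Type*} (G : SimpleGraph V) : ℕ :=
  sInf {k : ℕ | ∃ c : V → Fin k, IsTriangleFreeColoring G c}

/-- The clique number: the largest `n` such that `G` contains `K_n` as a subgraph. -/
noncomputable def cliqueNum' {V : Type*} (G : SimpleGraph V) : ℕ :=
  sSup {n : ℕ | ∃ s : Finset V, G.IsNClique n s}

/-!
In a triangle-free graph without independent sets of size four every neighborhood is independent.
Splitting the graph into a vertex, its neighbors and its non-neighbors bounds the order by nine,
inductively in the independence number, and order nine would force a cubic graph on an odd number of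
vertices; so the order is at most eight, that is, `R(3, 4) ≤ 9`. Hence in a graph without
independent sets of size four every class of a triangle-free coloring has at most eight vertices,
and on seventeen vertices two colors do not suffice. The Paley graph of order 17, which witnesses
`R(4, 4) > 17`, has neither a `K₄` nor an independent set of size four.
-/

open SimpleGraph

section IndependenceNumber

variable {V : Type*} {G : SimpleGraph V}

lemma cliqueNum_lt_of_cliqueFree {n : ℕ} (h : G.CliqueFree n) : G.cliqueNum < n := by
  obtain ⟨s, hs⟩ := G.exists_isNClique_cliqueNum
  by_contra! hn
  exact h.mono hn s hs

lemma compl_induce (s : Set V) : (G.induce s)ᶜ = Gᶜ.induce s := by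
  ext u v
  simp [Subtype.ext_iff]

lemma indepNum_induce_le [Finite V] (s : Set V) : (G.induce s).indepNum ≤ G.indepNum := by
  rw [← cliqueNum_compl, ← cliqueNum_compl, compl_induce]
  exact Gᶜ.cliqueNum_induce_le s

lemma cliqueNum_induce_neighborSet_lt [Finite V] (v : V) :
    (G.induce (G.neighborSet v)).cliqueNum < G.cliqueNum := by
  classical
  obtain ⟨t, ht⟩ := (G.induce (G.neighborSet v)).exists_isNClique_cliqueNum
  rw [isNClique_induce_iff] at ht
  have hv : G.IsNClique ((G.induce (G.neighborSet v)).cliqueNum + 1)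
      (insert v (t.map (.subtype _))) := by
    refine ht.insert fun w hw ↦ ?_
    obtain ⟨u, -, rfl⟩ := Finset.mem_map.1 hw
    exact u.2
  exact Nat.lt_of_succ_le (hv.card_eq.symm.trans_le hv.isClique.card_le_cliqueNum)

variable (G) in
lemma indepNum_induce_compl_neighborSet_lt [Finite V] (v : V) :
    (G.induce (Gᶜ.neighborSet v)).indepNum < G.indepNum := by
  rw [← cliqueNum_compl, ← cliqueNum_compl, compl_induce]
  exact cliqueNum_induce_neighborSet_lt v

end IndependenceNumber

section RamseyBound

variable {V : Type*} [Fintype V] {G : SimpleGraph V} {t : ℕ}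

lemma degree_le_indepNum_of_cliqueFree_three [DecidableRel G.Adj]
    (h : G.CliqueFree 3) (v : V) : G.degree v ≤ G.indepNum := by
  rw [← card_neighborFinset_eq_degree]
  apply IsIndepSet.card_le_indepNum
  simpa only [coe_neighborFinset] using isIndepSet_neighborSet_of_triangleFree G h v

variable (G) in
lemma card_eq_degree_add_card_compl_neighborSet [DecidableEq V] [DecidableRel G.Adj] (v : V) :
    Fintype.card V = G.degree v + 1 + Fintype.card (Gᶜ.neighborSet v) := by
  have hlt := G.degree_lt_card_verts v
  rw [card_neighborSet_eq_degree, degree_compl]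
  omega

theorem two_mul_card_le_of_cliqueFree_three (h : G.CliqueFree 3) (ht : G.indepNum ≤ t) :
    2 * Fintype.card V ≤ t * (t + 3) := by
  classical
  induction t generalizing V with
  | zero =>
    have : IsEmpty V := ⟨fun v ↦ by
      have hlt := indepNum_induce_compl_neighborSet_lt G v
      omega⟩
    simp
  | succ t ih =>
    rcases isEmpty_or_nonempty V with _ | ⟨⟨v⟩⟩
    · simp
    have hdeg := (degree_le_indepNum_of_cliqueFree_three h v).trans ht
    have hlt := (indepNum_induce_compl_neighborSet_lt G v).trans_le ht
    have hcompl := ih (h.comap ⟨(Embedding.induce _).toCopy⟩) (Nat.le_of_lt_succ hlt)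
    rw [card_eq_degree_add_card_compl_neighborSet G v]
    linarith

theorem isRegularOfDegree_of_two_mul_card_eq [DecidableRel G.Adj] (h : G.CliqueFree 3)
    (ht : G.indepNum ≤ t) (hcard : 2 * Fintype.card V = t * (t + 3)) :
    G.IsRegularOfDegree t := by
  classical
  intro v
  obtain _ | t := t
  · have hlt := indepNum_induce_compl_neighborSet_lt G v
    omega
  have hdeg := (degree_le_indepNum_of_cliqueFree_three h v).trans ht
  have hlt := (indepNum_induce_compl_neighborSet_lt G v).trans_le ht
  have hcompl := two_mul_card_le_of_cliqueFree_three (h.comap ⟨(Embedding.induce _).toCopy⟩)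
    (Nat.le_of_lt_succ hlt)
  rw [card_eq_degree_add_card_compl_neighborSet G v] at hcard
  linarith

theorem card_le_eight_of_cliqueFree_three (h : G.CliqueFree 3) (hG : G.indepNum ≤ 3) :
    Fintype.card V ≤ 8 := by
  classical
  have hle := two_mul_card_le_of_cliqueFree_three h hG
  by_contra! hlt
  have hcard : Fintype.card V = 9 := by omega
  have hreg := isRegularOfDegree_of_two_mul_card_eq h hG (by omega)
  have hsum : 9 * 3 = 2 * G.edgeFinset.card := by
    rw [← hcard, ← G.sum_degrees_eq_twice_card_edges]
    simp [hreg.degree_eq]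
  omega

end RamseyBound

namespace IsTriangleFreeColoring

variable {V : Type*} {G : SimpleGraph V} {k : ℕ} {c : V → Fin k}

lemma cliqueFree_induce_fiber (hc : IsTriangleFreeColoring G c) (i : Fin k) :
    (G.induce {v | c v = i}).CliqueFree 3 := by
  classical
  intro s hs
  obtain ⟨u, v, w, huv, huw, hvw, -⟩ := is3Clique_iff.1 hs
  exact hc u v w huv hvw huw ⟨u.2.trans v.2.symm, v.2.trans w.2.symm⟩

theorem card_le_eight_mul [Fintype V] (hc : IsTriangleFreeColoring G c) (hG : G.indepNum ≤ 3) :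
    Fintype.card V ≤ 8 * k := by
  classical
  have hclass (i : Fin k) : Fintype.card {v // c v = i} ≤ 8 :=
    card_le_eight_of_cliqueFree_three (hc.cliqueFree_induce_fiber i)
      ((indepNum_induce_le _).trans hG)
  calc
    Fintype.card V = ∑ i, Fintype.card {v // c v = i} := by
      rw [← Fintype.card_sigma]
      exact Fintype.card_congr (Equiv.sigmaFiberEquiv c).symm
    _ ≤ ∑ _i : Fin k, 8 := Finset.sum_le_sum fun i _ ↦ hclass i
    _ = 8 * k := by simp [mul_comm]

end IsTriangleFreeColoring

theorem cliqueFree_succ_circulantGraph_of_cliqueFreeOn {A : Type*} [AddGroup A] {s : Set A} {n : ℕ}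
    (h : (circulantGraph s).CliqueFreeOn ((circulantGraph s).neighborSet 0) n) :
    (circulantGraph s).CliqueFree (n + 1) := by
  classical
  intro t ht
  obtain ⟨v, hv⟩ : t.Nonempty := Finset.card_pos.1 (by simp [ht.card_eq])
  have herase : (circulantGraph s).IsNClique n (t.erase v) := ht.erase_of_mem hv
  have htranslate := herase.map (f := (Equiv.subRight v).toEmbedding)
  refine h ?_ (htranslate.mono ?_)
  · intro x hx
    obtain ⟨w, hw, rfl⟩ := Finset.mem_map.1 hx
    have hvw := ht.isClique hv (Finset.mem_of_mem_erase hw) (Finset.ne_of_mem_erase hw).symm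
    simpa [sub_eq_add_neg] using circulantGraph_adj_translate (d := -v) |>.2 hvw
  · rw [map_le_iff_le_comap]
    intro x y hxy
    simpa [sub_eq_add_neg] using circulantGraph_adj_translate (d := -v) |>.2 hxy

/-- The Paley graph of order 17, in the form where differences are the quadratic nonresidues
`±3, ±5, ±6, ±7` modulo 17; multiplication by a nonresidue turns it into the usual one. -/
def paleyGraph17 : SimpleGraph (Fin 17) :=
  circulantGraph {3, 5, 6, 7}

instance : DecidableRel paleyGraph17.Adj :=
  inferInstanceAs (DecidableRel (circulantGraph _).Adj)

lemma cliqueFree_four_paleyGraph17 : paleyGraph17.CliqueFree 4 := by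
  have htriangle : ∀ a, paleyGraph17.Adj 0 a → ∀ b, paleyGraph17.Adj 0 b →
      paleyGraph17.Adj a b → ∀ c, paleyGraph17.Adj 0 c → paleyGraph17.Adj a c →
      ¬ paleyGraph17.Adj b c := by
    decide +kernel
  refine cliqueFree_succ_circulantGraph_of_cliqueFreeOn fun s hs hclique ↦ ?_
  obtain ⟨a, b, c, hab, hac, hbc, rfl⟩ := is3Clique_iff.1 hclique
  exact htriangle a (hs (by simp)) b (hs (by simp)) hab c (hs (by simp)) hac hbc

/-- The self-complementarity of the Paley graph: multiplication by the nonresidue `3`, with inverse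
multiplication by `6`, exchanges residues and nonresidues modulo 17. -/
def paleyGraph17ComplIso : paleyGraph17ᶜ ≃g paleyGraph17 where
  toFun v := 3 * v
  invFun v := 6 * v
  left_inv := by decide
  right_inv := by decide
  map_rel_iff' := by decide +kernel

lemma indepNum_paleyGraph17_le_three : paleyGraph17.indepNum ≤ 3 := by
  rw [← cliqueNum_compl]
  exact Nat.le_of_lt_succ <| cliqueNum_lt_of_cliqueFree <|
    cliqueFree_four_paleyGraph17.comap ⟨paleyGraph17ComplIso.toCopy⟩

theorem cliqueNum_paleyGraph17 : paleyGraph17.cliqueNum = 3 := by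
  have htriangle : paleyGraph17.IsNClique 3 {0, 3, 10} :=
    is3Clique_triple_iff.2 (by decide)
  exact le_antisymm
    (Nat.le_of_lt_succ <| cliqueNum_lt_of_cliqueFree cliqueFree_four_paleyGraph17)
    (htriangle.card_eq ▸ htriangle.isClique.card_le_cliqueNum)

lemma isTriangleFreeColoring_paleyGraph17 :
    IsTriangleFreeColoring (k := 3) paleyGraph17 fun v ↦ ⟨v / 6, by omega⟩ := by
  -- The color classes are intervals of at most six vertices. Adjacent vertices of such an interval
  -- differ by `3` or `5`, and a sum of two such differences is never a third one.
  unfold IsTriangleFreeColoring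
  decide +kernel

theorem triChromNum_paleyGraph17 : triChromNum paleyGraph17 = 3 := by
  refine IsLeast.csInf_eq ⟨⟨_, isTriangleFreeColoring_paleyGraph17⟩, ?_⟩
  rintro k ⟨c, hc⟩
  have hcard := hc.card_le_eight_mul indepNum_paleyGraph17_le_three
  rw [Fintype.card_fin] at hcard
  omega

/-- There is a finite simple graph with `ω(G) = 3` and `χ₃(G) = 3 = ⌈ω(G)/2⌉ + 1`. -/
theorem exists_K4free_graph_meeting_bound :
    ∃ (n : ℕ) (G : SimpleGraph (Fin n)),
      cliqueNum' G = 3 ∧ triChromNum G = 3 ∧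
        triChromNum G = (cliqueNum' G + 1) / 2 + 1 := by
  have hω : cliqueNum' paleyGraph17 = 3 := cliqueNum_paleyGraph17
  have hχ := triChromNum_paleyGraph17
  exact ⟨17, paleyGraph17, hω, hχ, by rw [hω, hχ]⟩
end

section
/- Let r ≥ 5 be an odd integer and k ≥ 1. In every triangle-free k-coloring of the k-cycle-clique with r joints, for every i ∈ {0,…,r−1} the k vertices of the joint J_i receive pairwise distinct colors. -/
/-- The `k`-cycle-clique with `r` joints: vertices `v_{i,j}` for `i < r`, `j < k`;
two distinct vertices are adjacent iff their first coordinates are at cyclic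
distance at most 1 modulo `r`. -/
def cycleClique (r k : ℕ) : SimpleGraph (Fin r × Fin k) :=
  SimpleGraph.fromRel (fun p q => (p.1.val + 1) % r = q.1.val ∨ p.1 = q.1)

/-!
Two consecutive joints form a clique with `2k` vertices, in which each of the `k` colors occurs at
most twice, hence exactly twice. So the number of occurrences of a color in a joint takes values
`t` and `2 - t` alternately around the cycle; as the cycle is odd, `t = 2 - t = 1`.
-/

open scoped Finset

lemma periodic_of_add_shift_eq_const {α M : Type*} [AddMonoid α] [AddCancelCommMonoid M]
    {f : α → M} {g : α} {s : M} {n : ℕ} (hn : Odd n) (hg : n • g = 0)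
    (h : ∀ x, f x + f (x + g) = s) : Function.Periodic f g := by
  have two_periodic : Function.Periodic f (2 • g) := fun x ↦ by
    apply add_left_cancel (a := f (x + g))
    calc f (x + g) + f (x + 2 • g) = s := by rw [two_nsmul, ← add_assoc, h]
      _ = f (x + g) + f x := by rw [add_comm, h]
  obtain ⟨m, rfl⟩ := hn
  have nsmul_eq : (m + 1) • 2 • g = g := by
    rw [← mul_nsmul, show 2 * (m + 1) = 2 * m + 1 + 1 by ring, succ_nsmul, hg, zero_add]
  simpa only [nsmul_eq] using two_periodic.nsmul (m + 1)

namespace IsTriangleFreeColoring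

variable {V : Type*} {G : SimpleGraph V} {k : ℕ} {c : V → Fin k} {s : Finset V}

lemma card_filter_color_le_two (hc : IsTriangleFreeColoring G c) (hs : G.IsClique s)
    (x : Fin k) : #{v ∈ s | c v = x} ≤ 2 := by
  by_contra! hlt
  obtain ⟨u, hu, v, hv, w, hw, huv, huw, hvw⟩ := Finset.two_lt_card.1 hlt
  rw [Finset.mem_filter] at hu hv hw
  exact hc u v w (hs hu.1 hv.1 huv) (hs hv.1 hw.1 hvw) (hs hu.1 hw.1 huw)
    ⟨hu.2.trans hv.2.symm, hv.2.trans hw.2.symm⟩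

lemma card_filter_color_eq_two (hc : IsTriangleFreeColoring G c) (hs : G.IsClique s)
    (hcard : #s = 2 * k) (x : Fin k) : #{v ∈ s | c v = x} = 2 := by
  have sum_eq : ∑ y, #{v ∈ s | c v = y} = ∑ _y : Fin k, 2 := by
    rw [← Finset.card_eq_sum_card_fiberwise fun v _ ↦ Finset.mem_coe.2 (Finset.mem_univ (c v)),
      hcard, Finset.sum_const, Finset.card_fin, smul_eq_mul, mul_comm]
  exact (Finset.sum_eq_sum_iff_of_le fun y _ ↦ hc.card_filter_color_le_two hs y).1 sum_eq x
    (Finset.mem_univ x)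

end IsTriangleFreeColoring

namespace cycleClique

variable {r k : ℕ}

lemma adj_iff [NeZero r] {p q : Fin r × Fin k} :
    (cycleClique r k).Adj p q ↔ p ≠ q ∧ (p.1 = q.1 ∨ p.1 + 1 = q.1 ∨ q.1 + 1 = p.1) := by
  have succ_eq_iff (a b : Fin r) : (a.val + 1) % r = b.val ↔ a + 1 = b := by
    rw [Fin.ext_iff, Fin.val_add, Fin.val_one', Nat.add_mod_mod]
  simp only [cycleClique, SimpleGraph.fromRel_adj, succ_eq_iff, eq_comm (a := q.1) (b := p.1)]
  tauto

/-- The joint `J_i` of `cycleClique r k`; `k` is explicit because `i` does not determine it. -/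
def joint (k : ℕ) (i : Fin r) : Finset (Fin r × Fin k) :=
  {i} ×ˢ Finset.univ

lemma mem_joint {i : Fin r} {p : Fin r × Fin k} : p ∈ joint k i ↔ p.1 = i := by
  simp only [joint, Finset.mem_product, Finset.mem_singleton, Finset.mem_univ, and_true]

lemma card_joint (i : Fin r) : #(joint k i) = k := by
  simp [joint]

lemma disjoint_joint {i i' : Fin r} (h : i ≠ i') : Disjoint (joint k i) (joint k i') :=
  Finset.disjoint_product.2 (.inl (Finset.disjoint_singleton.2 h))

lemma isClique_joint_union_joint_add_one [NeZero r] (i : Fin r) :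
    (cycleClique r k).IsClique ↑(joint k i ∪ joint k (i + 1)) := by
  intro p hp q hq hpq
  rw [Finset.mem_coe, Finset.mem_union, mem_joint, mem_joint] at hp hq
  refine adj_iff.2 ⟨hpq, ?_⟩
  rcases hp with hp | hp <;> rcases hq with hq | hq <;> simp [hp, hq]

lemma card_filter_color_joint_add_succ_eq_two [NeZero r] (hr : 1 < r)
    {c : Fin r × Fin k → Fin k} (hc : IsTriangleFreeColoring (cycleClique r k) c) (i : Fin r)
    (x : Fin k) :
    #{v ∈ joint k i | c v = x} + #{v ∈ joint k (i + 1) | c v = x} = 2 := by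
  have one_ne_zero : (1 : Fin r) ≠ 0 := by
    rw [Ne, Fin.ext_iff, Fin.val_one', Fin.val_zero, Nat.mod_eq_of_lt hr]
    exact Nat.one_ne_zero
  have hdisj : Disjoint (joint k i) (joint k (i + 1)) :=
    disjoint_joint fun h ↦ one_ne_zero (left_eq_add.1 h)
  rw [← Finset.card_union_of_disjoint (Finset.disjoint_filter_filter hdisj),
    ← Finset.filter_union]
  refine hc.card_filter_color_eq_two (isClique_joint_union_joint_add_one i) ?_ x
  rw [Finset.card_union_of_disjoint hdisj, card_joint, card_joint, two_mul]

lemma card_filter_color_joint_eq_one (hr : 1 < r) (hodd : Odd r) {c : Fin r × Fin k → Fin k}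
    (hc : IsTriangleFreeColoring (cycleClique r k) c) (i : Fin r) (x : Fin k) :
    #{v ∈ joint k i | c v = x} = 1 := by
  have : NeZero r := ⟨by omega⟩
  have hsum (l : Fin r) := card_filter_color_joint_add_succ_eq_two hr hc l x
  have nsmul_one_eq_zero : r • (1 : Fin r) = 0 := by
    simpa only [Fintype.card_fin] using card_nsmul_eq_zero (x := (1 : Fin r))
  have hperiodic : #{v ∈ joint k (i + 1) | c v = x} = #{v ∈ joint k i | c v = x} :=
    periodic_of_add_shift_eq_const hodd nsmul_one_eq_zero hsum i
  have := hsum i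
  omega

end cycleClique

/-- For odd `r ≥ 5`, in every triangle-free `k`-coloring of the `k`-cycle-clique with
`r` joints, the vertices of each joint receive pairwise distinct colors. -/
theorem cycleClique_odd_joints_colors_distinct (r k : ℕ) (hr : 5 ≤ r) (hodd : Odd r)
    (hk : 1 ≤ k) (c : Fin r × Fin k → Fin k)
    (hc : IsTriangleFreeColoring (cycleClique r k) c) (i : Fin r) :
    ∀ j j' : Fin k, c (i, j) = c (i, j') → j = j' := by
  intro j j' hjj'
  have hone := cycleClique.card_filter_color_joint_eq_one (by omega) hodd hc i (c (i, j'))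
  have heq : (i, j) = (i, j') :=
    Finset.card_le_one.1 hone.le _ (by simp [cycleClique.mem_joint, hjj'])
      _ (by simp [cycleClique.mem_joint])
  exact congrArg Prod.snd heq
end
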